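/- arXiv:1410.6856 — 2 statements merged into one kernel-verified Lean document; each statement's English description precedes it below -/
import Mathlib

section
/- For every real number k ≥ 2 there exists a constant N such that for every integer n > N there exist two distinct primes p and q with ((k-1)/k)·n < p < (k/(k-1))·n and ((k-1)/k)·n < q < (k/(k-1))·n. -/
open Real Set Filter Topology MeasureTheory
open scoped ArithmeticFunction.vonMangoldt

namespace FracThm

lemma term_eq (f : ℕ → ℝ) (n : ℕ) (ε t : ℝ) (hε : 0 < ε) :
    LSeries.term (fun n => (f n : ℂ)) (1 + ε - Complex.I * t) n =
      ((f n * (n : ℝ) ^ (-(1 + ε)) : ℝ) : ℂ) * Complex.exp (Complex.I * t * Real.log n) := by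
  rcases Nat.eq_zero_or_pos n with rfl | hn
  · rw [LSeries.term_zero, Nat.cast_zero, Real.zero_rpow (by linarith)]
    simp
  · have hn0 : (0:ℝ) < n := by exact_mod_cast hn
    rw [LSeries.term_of_ne_zero hn.ne', Real.rpow_def_of_pos hn0,
      Complex.cpow_def_of_ne_zero (by exact_mod_cast hn.ne'), div_eq_mul_inv, ← Complex.exp_neg]
    push_cast
    rw [mul_assoc, ← Complex.exp_add, ← Complex.natCast_log]
    congr 2
    ring

lemma summable_vM (ε : ℝ) (hε : 0 < ε) :
    Summable (fun n : ℕ => Λ n * (n : ℝ) ^ (-(1 + ε))) := by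
  have h := ArithmeticFunction.LSeriesSummable_vonMangoldt
    (s := 1 + ε - Complex.I * (0:ℝ)) (by simpa using hε)
  unfold LSeriesSummable at h
  rw [funext (fun n => term_eq (fun n => Λ n) n ε 0 hε)] at h
  simp only [Complex.ofReal_zero, mul_zero, zero_mul, Complex.exp_zero, mul_one] at h
  exact_mod_cast h

lemma summable_one' (ε : ℝ) (hε : 0 < ε) :
    Summable (fun n : ℕ => (n : ℝ) ^ (-(1 + ε))) := by
  rw [Real.summable_nat_rpow]; linarith

lemma exists_H : ∃ H : ℂ → ℂ, ContinuousOn H {s | 1 ≤ s.re} ∧ ∀ ε : ℝ, 0 < ε → ∀ t : ℝ,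
    HasSum (fun n : ℕ => (((Λ n - 1) * (n : ℝ) ^ (-(1 + ε)) : ℝ) : ℂ) *
      Complex.exp (Complex.I * t * Real.log n)) (H (1 + ε - Complex.I * t)) := by
  classical
  let B : ℂ → ℂ := Function.update (fun s => riemannZeta s - 1 / (s - 1)) 1
    (Real.eulerMascheroniConstant : ℂ)
  have hB : Continuous B := by
    rw [continuous_iff_continuousAt]
    intro s
    by_cases hs : s = 1
    · subst hs
      exact continuousAt_update_same.mpr tendsto_riemannZeta_sub_one_div
    · refine (continuousAt_update_of_ne hs).mpr ?_
      refine (differentiableAt_riemannZeta hs).continuousAt.sub ?_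
      exact continuousAt_const.div (continuousAt_id.sub continuousAt_const) (sub_ne_zero.mpr hs)
  refine ⟨fun s => ArithmeticFunction.vonMangoldt.LFunctionResidueClassAux (1 : ZMod 1) s - B s,
    (ArithmeticFunction.vonMangoldt.continuousOn_LFunctionResidueClassAux _).sub hB.continuousOn, ?_⟩
  intro ε hε t
  set s : ℂ := 1 + ε - Complex.I * t with hs
  have hre : 1 < s.re := by simp [hs, hε]
  have hs1 : s ≠ 1 := by
    intro h; rw [h] at hre; simp at hre
  have h1 := ArithmeticFunction.vonMangoldt.eqOn_LFunctionResidueClassAux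
    (isUnit_one : IsUnit (1 : ZMod 1)) hre
  have hres : (fun n : ℕ => (ArithmeticFunction.vonMangoldt.residueClass (1 : ZMod 1) n : ℂ))
      = fun n => (Λ n : ℂ) := by
    ext n
    have : (n : ZMod 1) = 1 := Subsingleton.elim _ _
    simp [ArithmeticFunction.vonMangoldt.residueClass, Set.indicator, this]
  have hval : ArithmeticFunction.vonMangoldt.LFunctionResidueClassAux (1 : ZMod 1) s - B s
      = LSeries (fun n => (Λ n : ℂ)) s - riemannZeta s := by
    rw [h1, ← hres]
    simp only [B, Function.update_of_ne hs1]
    simp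
  show HasSum _ (ArithmeticFunction.vonMangoldt.LFunctionResidueClassAux (1 : ZMod 1) s - B s)
  rw [hval]
  have hsumΛ := (ArithmeticFunction.LSeriesSummable_vonMangoldt hre).LSeriesHasSum
  have hsum1 := LSeriesHasSum_one hre
  unfold LSeriesHasSum at hsumΛ hsum1
  have := hsumΛ.sub hsum1
  convert! this using 2 with n
  have e1 := term_eq (fun n => Λ n) n ε t hε
  have e2 := term_eq (fun n => 1) n ε t hε
  have e3 : (fun _ : ℕ => ((1:ℝ) : ℂ)) = (1 : ℕ → ℂ) := by ext; simp
  rw [e3] at e2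
  rw [hs, e1, e2]
  push_cast
  ring

/-- The Fejer kernel. -/
noncomputable def ker (T u : ℝ) : ℝ :=
  if u = 0 then T else 2 * (1 - Real.cos (T * u)) / (T * u ^ 2)

lemma ker_nonneg {T : ℝ} (hT : 0 < T) (u : ℝ) : 0 ≤ ker T u := by
  unfold ker
  split_ifs
  · exact hT.le
  · have := Real.cos_le_one (T * u)
    have h : 0 ≤ 1 - Real.cos (T * u) := by linarith
    positivity

lemma ker_le {T : ℝ} (hT : 0 < T) (u : ℝ) : ker T u ≤ T := by
  unfold ker
  split_ifs with h
  · exact le_rfl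
  · have := Real.one_sub_sq_div_two_le_cos (x := T * u)
    have hu : 0 < u ^ 2 := by positivity
    rw [div_le_iff₀ (by positivity)]
    nlinarith

lemma ker_ge {T : ℝ} (hT : 0 < T) {u : ℝ} (h0 : 0 ≤ u) (h1 : u ≤ 1 / T) : T / 4 ≤ ker T u := by
  unfold ker
  split_ifs with h
  · linarith
  · have hx : T * u ≤ 1 := by
      rw [le_div_iff₀ hT] at h1; linarith
    have hx0 : 0 ≤ T * u := by positivity
    have hc := Real.cos_le_one_sub_mul_cos_sq (x := T * u)
      (by rw [abs_of_nonneg hx0]; linarith [Real.pi_gt_three])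
    have hpi : (1:ℝ) / 8 ≤ 2 / π ^ 2 := by
      rw [div_le_div_iff₀ (by norm_num) (by positivity)]
      nlinarith [Real.pi_le_four, Real.pi_pos]
    have hu : 0 < u ^ 2 := by positivity
    rw [le_div_iff₀ (by positivity)]
    have : 1 / 8 * (T * u) ^ 2 ≤ 2 / π ^ 2 * (T * u) ^ 2 := by gcongr
    nlinarith

lemma ker_tail {T δ : ℝ} (hT : 0 < T) (hδ : 0 < δ) {u : ℝ} (hu : δ ≤ |u|) :
    ker T u ≤ 4 * (1 + 1 / δ ^ 2) / T * (1 / (1 + u ^ 2)) := by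
  have hu0 : u ≠ 0 := by
    rintro rfl; simp at hu; linarith
  unfold ker
  rw [if_neg hu0]
  have hc := Real.neg_one_le_cos (T * u)
  have hu2 : 0 < u ^ 2 := by positivity
  have hd : δ ^ 2 ≤ u ^ 2 := by rw [← sq_abs u]; gcongr
  have h1 : 1 + u ^ 2 ≤ (1 + 1 / δ ^ 2) * u ^ 2 := by
    have : 1 ≤ 1 / δ ^ 2 * u ^ 2 := by
      rw [one_div, inv_mul_eq_div, le_div_iff₀ (by positivity)]; linarith
    linarith
  calc 2 * (1 - Real.cos (T * u)) / (T * u ^ 2) ≤ 4 / (T * u ^ 2) := by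
        gcongr; linarith
    _ ≤ _ := by
        rw [div_mul_div_comm, div_le_div_iff₀ (by positivity) (by positivity)]
        nlinarith [mul_le_mul_of_nonneg_left h1 hT.le]

lemma ker_integral {T : ℝ} (hT : 0 < T) (u : ℝ) :
    ∫ t in (-T)..T, ((1 - |t| / T : ℝ) : ℂ) * Complex.exp (Complex.I * t * u) = (ker T u : ℂ) := by
  have hcont : Continuous (fun t : ℝ => ((1 - |t| / T : ℝ) : ℂ) * Complex.exp (Complex.I * t * u)) := by
    fun_prop
  rw [← intervalIntegral.integral_add_adjacent_intervals (b := 0)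
    (hcont.intervalIntegrable _ _) (hcont.intervalIntegrable _ _)]
  have hneg := intervalIntegral.integral_comp_neg (a := 0) (b := T)
    (fun t : ℝ => ((1 - |t| / T : ℝ) : ℂ) * Complex.exp (Complex.I * t * u))
  rw [neg_zero] at hneg
  have hcont' : Continuous
      (fun t : ℝ => ((1 - |-t| / T : ℝ) : ℂ) * Complex.exp (Complex.I * (-t : ℝ) * u)) := by
    fun_prop
  rw [← hneg, ← intervalIntegral.integral_add
    (hcont'.intervalIntegrable _ _) (hcont.intervalIntegrable _ _)]
  have hreal : ∫ t in (0:ℝ)..T, (1 - t / T) * (2 * Real.cos (t * u)) = ker T u := by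
    unfold ker
    split_ifs with h
    · subst h
      have : ∀ t ∈ uIcc 0 T, HasDerivAt (fun t : ℝ => 2 * t - t ^ 2 / T)
          ((1 - t / T) * (2 * Real.cos (t * 0))) t := by
        intro t _
        have := ((hasDerivAt_id t).const_mul 2).sub (((hasDerivAt_id t).pow 2).div_const T)
        convert! this using 1
        simp; ring
      rw [intervalIntegral.integral_eq_sub_of_hasDerivAt this
        (Continuous.intervalIntegrable (by fun_prop) _ _)]
      field_simp; ring
    · have : ∀ t ∈ uIcc 0 T, HasDerivAt (fun t : ℝ => (1 - t / T) * (2 * Real.sin (t * u) / u)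
          - 2 * Real.cos (t * u) / (T * u ^ 2))
          ((1 - t / T) * (2 * Real.cos (t * u))) t := by
        intro t _
        have hl : HasDerivAt (fun t : ℝ => t * u) u t := by
          simpa using (hasDerivAt_id t).mul_const u
        have h1 : HasDerivAt (fun t : ℝ => 1 - t / T) (-(1 / T)) t := by
          simpa using ((hasDerivAt_id t).div_const T).const_sub 1
        have h2 := ((hl.sin).const_mul 2).div_const u
        have h3 := ((hl.cos).const_mul 2).div_const (T * u ^ 2)
        convert! (h1.mul h2).sub h3 using 1
        field_simp; ring
      rw [intervalIntegral.integral_eq_sub_of_hasDerivAt this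
        (Continuous.intervalIntegrable (by fun_prop) _ _)]
      simp
      field_simp; ring
  rw [← hreal, ← intervalIntegral.integral_ofReal]
  refine intervalIntegral.integral_congr fun t ht => ?_
  rw [uIcc_of_le hT.le] at ht
  simp only [abs_neg, abs_of_nonneg ht.1]
  rw [← mul_add]
  push_cast
  rw [Complex.two_cos]
  congr 1
  rw [add_comm]
  congr 2 <;> ring

/-- The weighted sum over all integers, as a Fourier integral. -/
noncomputable def RR (H : ℂ → ℂ) (T y ε : ℝ) : ℂ :=
  ∫ t in (-T)..T, ((1 - |t| / T : ℝ) : ℂ) * Complex.exp (-(Complex.I * t * y)) *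
    H (1 + ε - Complex.I * t)

lemma hasSum_ker {H : ℂ → ℂ} (hH : ∀ ε : ℝ, 0 < ε → ∀ t : ℝ,
    HasSum (fun n : ℕ => (((Λ n - 1) * (n : ℝ) ^ (-(1 + ε)) : ℝ) : ℂ) *
      Complex.exp (Complex.I * t * Real.log n)) (H (1 + ε - Complex.I * t)))
    {T : ℝ} (hT : 0 < T) (y : ℝ) {ε : ℝ} (hε : 0 < ε) :
    HasSum (fun n : ℕ => (((Λ n - 1) * (n : ℝ) ^ (-(1 + ε)) * ker T (Real.log n - y) : ℝ) : ℂ))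
      (RR H T y ε) := by
  unfold RR
  have hsum : Summable (fun n : ℕ => |(Λ n - 1) * (n : ℝ) ^ (-(1 + ε))|) := by
    have := ((summable_vM ε hε).sub (summable_one' ε hε)).abs
    refine this.congr fun n => ?_
    congr 1
    ring
  have key : HasSum (fun n : ℕ => ∫ t in (-T)..T, ((1 - |t| / T : ℝ) : ℂ) *
      Complex.exp (-(Complex.I * t * y)) * ((((Λ n - 1) * (n : ℝ) ^ (-(1 + ε)) : ℝ) : ℂ) *
      Complex.exp (Complex.I * t * Real.log n))) (∫ t in (-T)..T, ((1 - |t| / T : ℝ) : ℂ) *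
      Complex.exp (-(Complex.I * t * y)) * H (1 + ε - Complex.I * t)) := by
    apply intervalIntegral.hasSum_integral_of_dominated_convergence
      (fun n _ => |(Λ n - 1) * (n : ℝ) ^ (-(1 + ε))|)
    · intro n
      apply Continuous.aestronglyMeasurable
      fun_prop
    · intro n
      refine ae_of_all _ fun t ht => ?_
      rw [uIoc_of_le (by linarith)] at ht
      have e1 : ‖Complex.exp (-(Complex.I * t * y))‖ = 1 := by
        rw [Complex.norm_exp]; simp
      have e2 : ‖Complex.exp (Complex.I * t * Real.log n)‖ = 1 := by
        rw [Complex.norm_exp]; simp [-Complex.natCast_log]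
      have e3 : |1 - |t| / T| ≤ 1 := by
        have h1 : |t| / T ≤ 1 := by
          rw [div_le_one hT, abs_le]; exact ⟨ht.1.le, ht.2⟩
        have h2 : 0 ≤ |t| / T := by positivity
        rw [abs_le]; constructor <;> linarith
      rw [norm_mul, norm_mul, norm_mul, e1, e2, Complex.norm_real, Complex.norm_real,
        Real.norm_eq_abs, Real.norm_eq_abs, mul_one, mul_one]
      exact mul_le_of_le_one_left (abs_nonneg _) e3
    · exact ae_of_all _ fun t _ => hsum
    · exact intervalIntegrable_const
    · exact ae_of_all _ fun t _ => (hH ε hε t).mul_left _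
  convert key using 2 with n
  rw [Complex.ofReal_mul, ← ker_integral hT, ← intervalIntegral.integral_const_mul]
  refine intervalIntegral.integral_congr fun t _ => ?_
  have : Complex.exp (Complex.I * t * ((Real.log n - y : ℝ) : ℂ)) =
      Complex.exp (-(Complex.I * t * y)) * Complex.exp (Complex.I * t * Real.log n) := by
    rw [← Complex.exp_add]; congr 1; push_cast; ring
  rw [this]; ring

lemma RR_tendsto_eps {H : ℂ → ℂ} (hH : ContinuousOn H {s | 1 ≤ s.re}) {T : ℝ} (hT : 0 < T) (y : ℝ) :
    Tendsto (fun ε => RR H T y ε) (𝓝[>] 0) (𝓝 (RR H T y 0)) := by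
  let K : Set ℂ := (fun p : ℝ × ℝ => (1 + p.1 - Complex.I * p.2 : ℂ)) '' (Icc 0 1 ×ˢ Icc (-T) T)
  have hK : IsCompact K := (isCompact_Icc.prod isCompact_Icc).image (by fun_prop)
  have hKs : K ⊆ {s | 1 ≤ s.re} := by
    rintro _ ⟨⟨a, b⟩, ⟨ha, hb⟩, rfl⟩
    simpa using ha.1
  obtain ⟨C, hC⟩ := hK.exists_bound_of_continuousOn (hH.mono hKs)
  have hcomp : ∀ ε : ℝ, 0 ≤ ε → Continuous (fun t : ℝ => H (1 + ε - Complex.I * t)) := by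
    intro ε hε
    refine hH.comp_continuous (by fun_prop) fun t => ?_
    simpa using hε
  unfold RR
  apply intervalIntegral.tendsto_integral_filter_of_dominated_convergence (fun _ => C)
  · filter_upwards [self_mem_nhdsWithin] with ε hε
    apply Continuous.aestronglyMeasurable
    refine Continuous.mul (by fun_prop) (hcomp ε (le_of_lt hε))
  · filter_upwards [Ioo_mem_nhdsGT (zero_lt_one' ℝ)] with ε hε
    refine ae_of_all _ fun t ht => ?_
    rw [uIoc_of_le (by linarith)] at ht
    have e1 : ‖Complex.exp (-(Complex.I * t * y))‖ = 1 := by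
      rw [Complex.norm_exp]; simp
    have e3 : |1 - |t| / T| ≤ 1 := by
      have h1 : |t| / T ≤ 1 := by
        rw [div_le_one hT, abs_le]; exact ⟨ht.1.le, ht.2⟩
      have h2 : 0 ≤ |t| / T := by positivity
      rw [abs_le]; constructor <;> linarith
    rw [norm_mul, norm_mul, e1, Complex.norm_real, Real.norm_eq_abs, mul_one]
    have := hC (1 + ε - Complex.I * t) ⟨(ε, t), ⟨⟨hε.1.le, hε.2.le⟩, ⟨ht.1.le, ht.2⟩⟩, rfl⟩
    exact (mul_le_of_le_one_left (norm_nonneg _) e3).trans this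
  · exact intervalIntegrable_const
  · refine ae_of_all _ fun t _ => ?_
    refine Tendsto.const_mul _ ?_
    have hc : ContinuousOn (fun ε : ℝ => H (1 + ε - Complex.I * t)) (Ici 0) := by
      refine hH.comp (by fun_prop) fun ε hε => ?_
      simpa using hε
    exact (hc 0 self_mem_Ici).mono_left (nhdsWithin_mono _ Ioi_subset_Ici_self)

lemma RR_tendsto_y (H : ℂ → ℂ) {T : ℝ} (hT : 0 < T) :
    Tendsto (fun y => RR H T y 0) atTop (𝓝 0) := by
  have h := Real.tendsto_integral_exp_smul_cocompact
    ((Ioc (-T) T).indicator fun t : ℝ => ((1 - |t| / T : ℝ) : ℂ) * H (1 - Complex.I * t))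
  have h2 : Tendsto (fun y : ℝ => y / (2 * π)) atTop (cocompact ℝ) :=
    (tendsto_id.atTop_div_const (by positivity)).mono_right atTop_le_cocompact
  refine (h.comp h2).congr fun y => ?_
  unfold RR
  rw [intervalIntegral.integral_of_le (by linarith), ← integral_indicator measurableSet_Ioc]
  refine integral_congr_ae (ae_of_all _ fun t => ?_)
  simp only [Set.indicator]
  split_ifs with ht
  · rw [Circle.smul_def, Real.fourierChar_apply, smul_eq_mul]
    have : ((2 * π * (-(t * (y / (2 * π)))) : ℝ) : ℂ) * Complex.I = -(Complex.I * t * y) := by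
      have : 2 * π * (-(t * (y / (2 * π)))) = -(t * y) := by
        field_simp
      rw [this]; push_cast; ring
    rw [this]
    simp; ring
  · simp

lemma summable_int : Summable (fun k : ℤ => 1 / (1 + (k : ℝ) ^ 2)) := by
  have h1 : Summable (fun k : ℤ => 1 / (k : ℝ) ^ 2) :=
    Real.summable_one_div_int_pow.mpr (by norm_num)
  have h2 : Summable (fun k : ℤ => if k = 0 then (1:ℝ) else 0) := (hasSum_ite_eq 0 1).summable
  refine Summable.of_nonneg_of_le (fun k => by positivity) (fun k => ?_) (h1.add h2)
  by_cases hk : k = 0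
  · subst hk; simp
  · have : (0:ℝ) < (k:ℝ) ^ 2 := by positivity
    simp only [hk, if_false, add_zero]
    apply one_div_le_one_div_of_le this
    linarith

lemma tail_bound : ∃ K : ℝ, 0 < K ∧ ∀ ε : ℝ, 0 < ε → ∀ y : ℝ, ∀ s : Finset ℕ,
    ∑ n ∈ s, Λ n * (n : ℝ) ^ (-(1 + ε)) * (1 / (1 + (Real.log n - y) ^ 2)) ≤ K := by
  set C : ℝ := (Real.log 4 + 4) * Real.exp 1 with hC
  have hCpos : 0 < C := by
    have : 0 < Real.log 4 := Real.log_pos (by norm_num)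
    positivity
  have hS0 : 0 < ∑' k : ℤ, 1 / (1 + (k : ℝ) ^ 2) :=
    summable_int.tsum_pos (fun k => by positivity) 0 (by norm_num)
  refine ⟨C * 3 * ∑' k : ℤ, 1 / (1 + (k : ℝ) ^ 2), by positivity, ?_⟩
  intro ε hε y s
  set m : ℤ := ⌊y⌋ with hm
  let fl : ℕ → ℤ := fun n => ⌊Real.log n⌋
  rw [← Finset.sum_fiberwise_of_maps_to (s := s) (t := s.image fl) (g := fl)
    (fun n hn => Finset.mem_image_of_mem _ hn)]
  have hfib : ∀ j ∈ s.image fl, ∑ n ∈ s with fl n = j,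
      Λ n * (n : ℝ) ^ (-(1 + ε)) * (1 / (1 + (Real.log n - y) ^ 2)) ≤
      C * 3 * (1 / (1 + ((j - m : ℤ) : ℝ) ^ 2)) := by
    intro j _
    have hterm : ∀ n ∈ s.filter (fun n => fl n = j),
        Λ n * (n : ℝ) ^ (-(1 + ε)) * (1 / (1 + (Real.log n - y) ^ 2)) ≤
        Λ n * (Real.exp (-j) * (3 * (1 / (1 + ((j - m : ℤ) : ℝ) ^ 2)))) := by
      intro n hn
      have hnj : fl n = j := (Finset.mem_filter.mp hn).2
      rcases Nat.eq_zero_or_pos n with rfl | hpos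
      · simp
      have hn0 : (1:ℝ) ≤ n := by exact_mod_cast hpos
      have hj1 : (j:ℝ) ≤ Real.log n := by rw [← hnj]; exact Int.floor_le _
      have hj2 : Real.log n < j + 1 := by rw [← hnj]; exact Int.lt_floor_add_one _
      have hm1 : (m:ℝ) ≤ y := Int.floor_le _
      have hm2 : y < m + 1 := Int.lt_floor_add_one _
      rw [mul_assoc]
      refine mul_le_mul_of_nonneg_left ?_ ArithmeticFunction.vonMangoldt_nonneg
      have hlog0 : 0 ≤ Real.log n := Real.log_nonneg hn0
      refine mul_le_mul ?_ ?_ (by positivity) (by positivity)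
      · rw [Real.rpow_def_of_pos (by linarith)]
        apply Real.exp_le_exp.mpr
        nlinarith
      · rw [mul_one_div, div_le_div_iff₀ (by positivity) (by positivity)]
        push_cast
        nlinarith [sq_nonneg (Real.log n - y - 1), sq_nonneg (Real.log n - y + 1),
          sq_nonneg ((j:ℝ) - m - 2 * (Real.log n - y))]
    refine (Finset.sum_le_sum hterm).trans ?_
    rw [← Finset.sum_mul]
    have hpsi : ∑ n ∈ s with fl n = j, Λ n ≤ Chebyshev.psi (Real.exp (j + 1)) := by
      rw [Chebyshev.psi_eq_sum_Icc]
      refine Finset.sum_le_sum_of_subset_of_nonneg (fun n hn => ?_)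
        (fun n _ _ => ArithmeticFunction.vonMangoldt_nonneg)
      have hnj : fl n = j := (Finset.mem_filter.mp hn).2
      rw [Finset.mem_Icc]
      refine ⟨Nat.zero_le _, Nat.le_floor ?_⟩
      rcases Nat.eq_zero_or_pos n with rfl | hpos
      · simp; positivity
      rw [← Real.log_le_iff_le_exp (by exact_mod_cast hpos), ← hnj]
      exact (Int.lt_floor_add_one _).le
    have hpsi2 := hpsi.trans (Chebyshev.psi_le_const_mul_self (Real.exp_pos _).le)
    refine (mul_le_mul_of_nonneg_right hpsi2 (by positivity)).trans_eq ?_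
    rw [hC, Real.exp_add, Real.exp_neg]
    field_simp
  refine (Finset.sum_le_sum hfib).trans ?_
  rw [← Finset.mul_sum]
  refine mul_le_mul_of_nonneg_left ?_ (by positivity)
  have hsh : Summable (fun j : ℤ => 1 / (1 + ((j - m : ℤ) : ℝ) ^ 2)) :=
    (Equiv.subRight m).summable_iff.mpr summable_int
  refine (hsh.sum_le_tsum _ (fun j _ => by positivity)).trans_eq ?_
  exact (Equiv.subRight m).tsum_eq (fun k : ℤ => 1 / (1 + (k : ℝ) ^ 2))

lemma main_lower {T : ℝ} (hT : 1 ≤ T) {y : ℝ} (hy : Real.log (4 * T) ≤ y) :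
    1 / 16 ≤ ∑ n ∈ Finset.Ioc ⌊Real.exp y⌋₊ ⌊Real.exp (y + 1 / T)⌋₊,
      (n : ℝ) ^ (-1 : ℝ) * ker T (Real.log n - y) := by
  have hT0 : 0 < T := by linarith
  have hlow : ∀ n ∈ Finset.Ioc ⌊Real.exp y⌋₊ ⌊Real.exp (y + 1 / T)⌋₊,
      Real.exp (-(y + 1 / T)) * (T / 4) ≤ (n : ℝ) ^ (-1 : ℝ) * ker T (Real.log n - y) := by
    intro n hn
    rw [Finset.mem_Ioc] at hn
    have h1 : Real.exp y < n := (Nat.floor_lt (Real.exp_pos _).le).mp hn.1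
    have h2 : (n:ℝ) ≤ Real.exp (y + 1 / T) := (Nat.le_floor_iff (Real.exp_pos _).le).mp hn.2
    have hn0 : (0:ℝ) < n := (Real.exp_pos _).trans h1
    have h3 : y ≤ Real.log n := (Real.le_log_iff_exp_le hn0).mpr h1.le
    have h4 : Real.log n ≤ y + 1 / T := (Real.log_le_iff_le_exp hn0).mpr h2
    refine mul_le_mul ?_ (ker_ge hT0 (by linarith) (by linarith)) (by positivity) (by positivity)
    rw [Real.rpow_neg_one, Real.exp_neg]
    exact inv_anti₀ hn0 h2
  refine le_trans ?_ (Finset.card_nsmul_le_sum _ _ _ hlow)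
  rw [nsmul_eq_mul, Nat.card_Ioc]
  have hcard : Real.exp (y + 1 / T) - 1 - Real.exp y ≤
      ((⌊Real.exp (y + 1 / T)⌋₊ - ⌊Real.exp y⌋₊ : ℕ) : ℝ) := by
    have h1 := Nat.lt_floor_add_one (Real.exp (y + 1 / T))
    have h2 := Nat.floor_le (Real.exp_pos y).le
    have h3 : ((⌊Real.exp (y + 1 / T)⌋₊ : ℕ) : ℝ) ≤
      ((⌊Real.exp (y + 1 / T)⌋₊ - ⌊Real.exp y⌋₊ : ℕ) : ℝ) + (⌊Real.exp y⌋₊ : ℝ) := by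
      exact_mod_cast (by omega)
    linarith
  refine le_trans ?_ (mul_le_mul_of_nonneg_right hcard (by positivity))
  have e1 : 4 * T ≤ Real.exp y := (Real.log_le_iff_le_exp (by positivity)).mp hy
  have e2 : 1 / T + 1 ≤ Real.exp (1 / T) := Real.add_one_le_exp _
  have e3 : Real.exp (1/T) ≤ 4 := by
    have : Real.exp (1 / T) ≤ Real.exp 1 := by
      apply Real.exp_le_exp.mpr; rw [div_le_one hT0]; exact hT
    linarith [Real.exp_one_lt_d9]
  rw [Real.exp_neg, Real.exp_add]
  set A := Real.exp y
  set B := Real.exp (1 / T)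
  have hA : 0 < A := Real.exp_pos _
  have hB : 0 < B := Real.exp_pos _
  have e4 : 1 + T ≤ T * B := by
    have := mul_le_mul_of_nonneg_left e2 hT0.le
    rwa [mul_add, mul_one_div_cancel hT0.ne', mul_one] at this
  rw [inv_mul_eq_div, ← mul_div_assoc, le_div_iff₀ (by positivity)]
  have e5 : B ≤ 3 := by
    have : Real.exp (1 / T) ≤ Real.exp 1 := by
      apply Real.exp_le_exp.mpr; rw [div_le_one hT0]; exact hT
    linarith [Real.exp_one_lt_d9]
  nlinarith [mul_le_mul_of_nonneg_left e4 hA.le, mul_le_mul_of_nonneg_left e5 hA.le]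

theorem psi_short {δ : ℝ} (hδ : 0 < δ) : ∃ c : ℝ, 0 < c ∧ ∃ Y : ℝ, ∀ y : ℝ, Y ≤ y →
    c * Real.exp y ≤ Chebyshev.psi (Real.exp (y + δ)) - Chebyshev.psi (Real.exp (y - δ)) := by
  obtain ⟨H, hHc, hHs⟩ := exists_H
  obtain ⟨K, hK, hKb⟩ := tail_bound
  set D : ℝ := 4 * (1 + 1 / δ ^ 2) with hD
  have hDpos : 0 < D := by positivity
  set T : ℝ := 1 + 64 * (D * K) with hTdef
  have hT1 : 1 ≤ T := by
    have : 0 < D * K := by positivity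
    linarith
  have hT : 0 < T := by linarith
  have hDK : D / T * K ≤ 1 / 64 := by
    rw [div_mul_eq_mul_div, div_le_iff₀ hT]; linarith
  have hev : ∀ᶠ y in atTop, ‖RR H T y 0‖ < 1 / 64 := by
    have := (RR_tendsto_y H hT).norm
    rw [norm_zero] at this
    exact this.eventually_lt_const (by norm_num)
  obtain ⟨Y, hY⟩ := eventually_atTop.mp hev
  refine ⟨Real.exp (-δ) / (32 * T), by positivity, max Y (Real.log (4 * T)), ?_⟩
  intro y hy
  have hRy := hY y ((le_max_left _ _).trans hy)
  have hyl := (le_max_right _ _).trans hy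
  set P : ℝ := Chebyshev.psi (Real.exp (y + δ)) - Chebyshev.psi (Real.exp (y - δ)) with hP
  set A : ℝ := Real.exp (-(y - δ)) * T * P with hA
  set N : Finset ℕ := Finset.Ioc ⌊Real.exp (y - δ)⌋₊ ⌊Real.exp (y + δ)⌋₊ with hN
  set S : Finset ℕ := Finset.Ioc ⌊Real.exp y⌋₊ ⌊Real.exp (y + 1 / T)⌋₊ with hS
  have hPN : P = ∑ n ∈ N, Λ n := by
    have hle : ⌊Real.exp (y - δ)⌋₊ ≤ ⌊Real.exp (y + δ)⌋₊ :=
      Nat.floor_mono (Real.exp_le_exp.mpr (by linarith))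
    rw [hP, hN]
    unfold Chebyshev.psi
    rw [← Finset.sum_Ioc_consecutive _ (Nat.zero_le _) hle]
    ring
  have hnear : ∀ ε : ℝ, 0 < ε → ∀ n ∈ N,
      Λ n * (n : ℝ) ^ (-(1 + ε)) * ker T (Real.log n - y) ≤ Λ n * (Real.exp (-(y - δ)) * T) := by
    intro ε hε n hn
    rw [hN, Finset.mem_Ioc] at hn
    have h1 : Real.exp (y - δ) < n := (Nat.floor_lt (Real.exp_pos _).le).mp hn.1
    have hnpos : 0 < n := by omega
    have hn1 : (1:ℝ) ≤ n := by exact_mod_cast hnpos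
    rw [mul_assoc]
    refine mul_le_mul_of_nonneg_left ?_ ArithmeticFunction.vonMangoldt_nonneg
    refine mul_le_mul ?_ (ker_le hT _) (ker_nonneg hT _) (Real.exp_pos _).le
    calc (n:ℝ) ^ (-(1 + ε)) ≤ (n:ℝ) ^ (-1 : ℝ) :=
          Real.rpow_le_rpow_of_exponent_le hn1 (by linarith)
      _ ≤ _ := by
          rw [Real.rpow_neg_one, Real.exp_neg]
          exact inv_anti₀ (Real.exp_pos _) h1.le
  have hfar : ∀ ε : ℝ, 0 < ε → ∀ n ∉ N,
      Λ n * (n : ℝ) ^ (-(1 + ε)) * ker T (Real.log n - y) ≤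
        D / T * (Λ n * (n : ℝ) ^ (-(1 + ε)) * (1 / (1 + (Real.log n - y) ^ 2))) := by
    intro ε hε n hn
    rcases Nat.eq_zero_or_pos n with rfl | hpos
    · simp
    have hn0 : (0:ℝ) < n := by exact_mod_cast hpos
    have hu : δ ≤ |Real.log n - y| := by
      rw [hN, Finset.mem_Ioc, not_and_or] at hn
      rcases hn with hn | hn
      · have h1 : (n:ℝ) ≤ Real.exp (y - δ) :=
          (Nat.le_floor_iff (Real.exp_pos _).le).mp (not_lt.mp hn)
        have := (Real.log_le_iff_le_exp hn0).mpr h1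
        rw [le_abs]; right; linarith
      · have h1 : Real.exp (y + δ) < n :=
          (Nat.floor_lt (Real.exp_pos _).le).mp (not_le.mp hn)
        have := (Real.le_log_iff_exp_le hn0).mpr h1.le
        rw [le_abs]; left; linarith
    have hk := ker_tail hT hδ hu
    have hnn : 0 ≤ Λ n * (n : ℝ) ^ (-(1 + ε)) :=
      mul_nonneg ArithmeticFunction.vonMangoldt_nonneg (by positivity)
    calc _ ≤ _ := mul_le_mul_of_nonneg_left hk hnn
      _ = _ := by rw [← hD]; ring
  have hbound : ∀ᶠ ε : ℝ in 𝓝[>] 0, ∑ n ∈ S, (n : ℝ) ^ (-(1 + ε)) * ker T (Real.log n - y) ≤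
      A + 1 / 64 + 1 / 64 := by
    have hev2 := ((RR_tendsto_eps hHc hT y).norm).eventually_lt_const hRy
    filter_upwards [hev2, self_mem_nhdsWithin] with ε hRε hε
    have hε : 0 < ε := hε
    have hs := hasSum_ker hHs hT y hε
    have hs' := Complex.hasSum_re hs
    simp only [Complex.ofReal_re] at hs'
    have hsΛ : Summable (fun n : ℕ => Λ n * (n : ℝ) ^ (-(1 + ε)) * ker T (Real.log n - y)) := by
      refine Summable.of_nonneg_of_le (fun n => mul_nonneg (mul_nonneg
        ArithmeticFunction.vonMangoldt_nonneg (by positivity)) (ker_nonneg hT _)) (fun n => ?_)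
        ((summable_vM ε hε).mul_right T)
      exact mul_le_mul_of_nonneg_left (ker_le hT _)
        (mul_nonneg ArithmeticFunction.vonMangoldt_nonneg (by positivity))
    have hs1 : Summable (fun n : ℕ => (n : ℝ) ^ (-(1 + ε)) * ker T (Real.log n - y)) := by
      refine Summable.of_nonneg_of_le (fun n => mul_nonneg (by positivity) (ker_nonneg hT _))
        (fun n => ?_) ((summable_one' ε hε).mul_right T)
      exact mul_le_mul_of_nonneg_left (ker_le hT _) (by positivity)
    have heq : (∑' n : ℕ, Λ n * (n : ℝ) ^ (-(1 + ε)) * ker T (Real.log n - y)) -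
        ∑' n : ℕ, (n : ℝ) ^ (-(1 + ε)) * ker T (Real.log n - y) = (RR H T y ε).re := by
      rw [← hsΛ.tsum_sub hs1, ← hs'.tsum_eq]
      refine tsum_congr fun n => ?_
      ring
    have hre : |(RR H T y ε).re| < 1 / 64 := (Complex.abs_re_le_norm _).trans_lt hRε
    have hSle := hs1.sum_le_tsum S (fun n _ => mul_nonneg (by positivity) (ker_nonneg hT _))
    have hΛle : ∑' n : ℕ, Λ n * (n : ℝ) ^ (-(1 + ε)) * ker T (Real.log n - y) ≤ A + 1 / 64 := by
      refine hsΛ.tsum_le_of_sum_le fun s => ?_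
      rw [← Finset.sum_filter_add_sum_filter_not s (fun n => n ∈ N)]
      refine add_le_add ?_ ?_
      · calc _ ≤ ∑ n ∈ s with n ∈ N, Λ n * (Real.exp (-(y - δ)) * T) :=
              Finset.sum_le_sum fun n hn => hnear ε hε n (Finset.mem_filter.mp hn).2
          _ ≤ ∑ n ∈ N, Λ n * (Real.exp (-(y - δ)) * T) := by
              refine Finset.sum_le_sum_of_subset_of_nonneg
                (fun n hn => (Finset.mem_filter.mp hn).2) (fun n _ _ => ?_)
              exact mul_nonneg ArithmeticFunction.vonMangoldt_nonneg (by positivity)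
          _ = A := by rw [← Finset.sum_mul, ← hPN, hA]; ring
      · calc _ ≤ ∑ n ∈ s with n ∉ N,
                D / T * (Λ n * (n : ℝ) ^ (-(1 + ε)) * (1 / (1 + (Real.log n - y) ^ 2))) :=
              Finset.sum_le_sum fun n hn => hfar ε hε n (Finset.mem_filter.mp hn).2
          _ ≤ D / T * K := by
              rw [← Finset.mul_sum]
              exact mul_le_mul_of_nonneg_left (hKb ε hε y _) (by positivity)
          _ ≤ _ := hDK
    have := (abs_lt.mp hre).1
    linarith
  have hlim : Tendsto (fun ε : ℝ => ∑ n ∈ S, (n : ℝ) ^ (-(1 + ε)) * ker T (Real.log n - y))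
      (𝓝[>] 0) (𝓝 (∑ n ∈ S, (n : ℝ) ^ (-1 : ℝ) * ker T (Real.log n - y))) := by
    refine tendsto_finsetSum _ fun n hn => Tendsto.mul_const _ ?_
    have hn0 : (n:ℝ) ≠ 0 := by
      rw [hS, Finset.mem_Ioc] at hn
      exact_mod_cast (by omega : n ≠ 0)
    have hc : Continuous (fun ε : ℝ => (n:ℝ) ^ (-(1 + ε))) :=
      Continuous.rpow continuous_const (by fun_prop) (fun _ => Or.inl hn0)
    have := hc.tendsto 0
    rw [add_zero] at this
    exact this.mono_left nhdsWithin_le_nhds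
  have hfin := le_of_tendsto hlim hbound
  have hlow := main_lower hT1 hyl
  have hAlow : 1 / 32 ≤ A := by linarith
  have hexp : Real.exp (-(y - δ)) * (Real.exp (-δ) * Real.exp y) = 1 := by
    rw [← Real.exp_add, ← Real.exp_add]; simp
  rw [div_mul_eq_mul_div, div_le_iff₀ (by positivity)]
  have h9 : 0 < Real.exp (-(y - δ)) := Real.exp_pos _
  refine le_of_mul_le_mul_left ?_ h9
  rw [hexp]
  rw [hA] at hAlow
  linarith

theorem two_primes {δ : ℝ} (hδ : 0 < δ) : ∃ N : ℕ, ∀ n : ℕ, N < n → ∃ p q : ℕ,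
    p.Prime ∧ q.Prime ∧ p ≠ q ∧ n * Real.exp (-δ) < p ∧ (p : ℝ) ≤ n * Real.exp δ ∧
    n * Real.exp (-δ) < q ∧ (q : ℝ) ≤ n * Real.exp δ := by
  obtain ⟨c, hc, Y, hY⟩ := psi_short hδ
  obtain ⟨C₀, hC₀⟩ := Chebyshev.psi_sub_theta_le_mul_sqrt
  set C := max C₀ 0 with hCdef
  have hC0 : 0 ≤ C := le_max_right _ _
  obtain ⟨N, hN⟩ := exists_nat_gt (max (Real.exp Y) ((C + 2) ^ 2 * Real.exp δ / c ^ 2))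
  refine ⟨N, fun n hn => ?_⟩
  have hnN : (N:ℝ) < n := by exact_mod_cast hn
  have hn1 : Real.exp Y ≤ n := ((le_max_left _ _).trans hN.le).trans hnN.le
  have hn2 : (C + 2) ^ 2 * Real.exp δ / c ^ 2 < n := ((le_max_right _ _).trans_lt hN).trans hnN
  have hn0 : (0:ℝ) < n := (Real.exp_pos _).trans_le hn1
  have hpsi := hY (Real.log n) ((Real.le_log_iff_exp_le hn0).mpr hn1)
  rw [sub_eq_add_neg (Real.log n), Real.exp_add, Real.exp_add, Real.exp_log hn0] at hpsi
  set a : ℝ := n * Real.exp (-δ) with ha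
  set b : ℝ := n * Real.exp δ with hb
  have ha0 : 0 < a := by positivity
  have hb0 : 0 < b := by positivity
  have hb1 : 1 ≤ b := by
    have h1 : (1:ℝ) ≤ n := by exact_mod_cast (by omega : 1 ≤ n)
    have h2 : 1 ≤ Real.exp δ := Real.one_le_exp hδ.le
    rw [hb]; nlinarith
  have hab : a ≤ b := by
    rw [ha, hb]; gcongr; linarith
  set P : Finset ℕ := (Finset.Ioc ⌊a⌋₊ ⌊b⌋₊).filter Nat.Prime with hP
  have hmem : ∀ p ∈ P, p.Prime ∧ a < p ∧ (p:ℝ) ≤ b := by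
    intro p hp
    rw [hP, Finset.mem_filter, Finset.mem_Ioc] at hp
    exact ⟨hp.2, (Nat.floor_lt ha0.le).mp hp.1.1, (Nat.le_floor_iff hb0.le).mp hp.1.2⟩
  have hth : Chebyshev.theta b - Chebyshev.theta a = ∑ p ∈ P, Real.log p := by
    unfold Chebyshev.theta
    rw [hP, Finset.sum_filter, Finset.sum_filter, Finset.sum_filter,
      ← Finset.sum_Ioc_consecutive _ (Nat.zero_le _) (Nat.floor_mono hab)]
    ring
  have hcard : 1 < P.card := by
    by_contra hcon
    have hcon : P.card ≤ 1 := not_lt.mp hcon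
    have h1 : ∑ p ∈ P, Real.log p ≤ P.card • Real.log b := by
      refine Finset.sum_le_card_nsmul _ _ _ fun p hp => ?_
      obtain ⟨hp1, _, hp3⟩ := hmem p hp
      exact Real.log_le_log (by exact_mod_cast hp1.pos) hp3
    have hlogb : 0 ≤ Real.log b := Real.log_nonneg hb1
    have h2 : P.card • Real.log b ≤ Real.log b := by
      rw [nsmul_eq_mul]
      exact mul_le_of_le_one_left hlogb (by exact_mod_cast hcon)
    have h3 : Real.log b ≤ 2 * √b := by
      have hs : 0 < √b := Real.sqrt_pos.mpr hb0
      have := Real.log_le_sub_one_of_pos hs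
      rw [Real.log_sqrt hb0.le] at this
      linarith
    have h4 : Chebyshev.psi b - Chebyshev.theta b ≤ C * √b :=
      (hC₀ b).trans (mul_le_mul_of_nonneg_right (le_max_left _ _) (Real.sqrt_nonneg _))
    have h5 := Chebyshev.theta_le_psi a
    have h6 : c * n ≤ (C + 2) * √b := by linarith
    have h7 : (c * n) ^ 2 ≤ ((C + 2) * √b) ^ 2 := by gcongr
    rw [mul_pow (C + 2), Real.sq_sqrt hb0.le, hb] at h7
    rw [div_lt_iff₀ (by positivity)] at hn2
    nlinarith [mul_lt_mul_of_pos_right hn2 hn0]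
  obtain ⟨p, hp, q, hq, hpq⟩ := Finset.one_lt_card.mp hcard
  obtain ⟨hp1, hp2, hp3⟩ := hmem p hp
  obtain ⟨hq1, hq2, hq3⟩ := hmem q hq
  exact ⟨p, q, hp1, hq1, hpq, hp2, hp3, hq2, hq3⟩

end FracThm

/-- Fractional theorem: for every real `k ≥ 2` there is a constant `N` such
that every integer `n > N` admits two distinct primes `p, q` with
`((k-1)/k)·n < p, q < (k/(k-1))·n`. -/
theorem fractional_theorem :
    ∀ k : ℝ, 2 ≤ k → ∃ N : ℕ, ∀ n : ℕ, N < n →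
      ∃ p q : ℕ, p.Prime ∧ q.Prime ∧ p ≠ q ∧
        ((k - 1) / k) * n < (p : ℝ) ∧ (p : ℝ) < (k / (k - 1)) * n ∧
        ((k - 1) / k) * n < (q : ℝ) ∧ (q : ℝ) < (k / (k - 1)) * n := by
  intro k hk
  have hk1 : 0 < k - 1 := by linarith
  have hr : 1 < k / (k - 1) := by rw [one_lt_div hk1]; linarith
  have hr0 : 0 < k / (k - 1) := by linarith
  have hlog : 0 < Real.log (k / (k - 1)) := Real.log_pos hr
  obtain ⟨N, hN⟩ := FracThm.two_primes (half_pos hlog)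
  refine ⟨N, fun n hn => ?_⟩
  obtain ⟨p, q, hp, hq, hpq, h1, h2, h3, h4⟩ := hN n hn
  have hn0 : (0:ℝ) < n := by exact_mod_cast (by omega : 0 < n)
  have e1 : Real.exp (Real.log (k / (k - 1)) / 2) < k / (k - 1) := by
    conv_rhs => rw [← Real.exp_log hr0]
    exact Real.exp_lt_exp.mpr (by linarith)
  have e2 : (k - 1) / k < Real.exp (-(Real.log (k / (k - 1)) / 2)) := by
    rw [Real.exp_neg, ← inv_div]
    exact (inv_lt_inv₀ hr0 (Real.exp_pos _)).mpr e1
  have b1 : (k / (k - 1)) * n > n * Real.exp (Real.log (k / (k - 1)) / 2) := by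
    rw [mul_comm]; exact mul_lt_mul_of_pos_left e1 hn0
  have b2 : ((k - 1) / k) * n < n * Real.exp (-(Real.log (k / (k - 1)) / 2)) := by
    rw [mul_comm]; exact mul_lt_mul_of_pos_left e2 hn0
  exact ⟨p, q, hp, hq, hpq, b2.trans h1, h2.trans_lt b1, b2.trans h3, h4.trans_lt b1⟩
end

section
/- For every real number k ≥ 2 there exists a constant N such that for all consecutive primes p' < p with p' > N, the gap satisfies p - p' < min(p'/(k-1), p/k) (as real numbers). -/
open MeasureTheory Filter Topology FourierTransform Complex

theorem kernel0 : ∃ (A : ℝ) (h : ℝ → ℂ) (g : ℝ → ℝ), 0 < A ∧ Continuous h ∧ HasCompactSupport h ∧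
    (∀ y, 𝓕 h y = (g y : ℂ)) ∧ Integrable g ∧ (∀ y, A ≤ |y| → g y ≤ 0) ∧ 0 < ∫ y, g y := by
  let φ : ContDiffBump (0 : ℝ) := ⟨1, 2, by norm_num, by norm_num⟩
  let f : ℝ → ℂ := fun x => (φ x : ℂ)
  have hfc : HasCompactSupport f := φ.hasCompactSupport.comp_left (g := fun x : ℝ => (x : ℂ)) (by simp)
  have hfs : ContDiff ℝ (⊤ : ℕ∞) f := Complex.ofRealCLM.contDiff.comp φ.contDiff
  have hf'c : HasCompactSupport (deriv f) := hfc.deriv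
  have hf's : ContDiff ℝ (⊤ : ℕ∞) (deriv f) := by
    have : ContDiff ℝ ((⊤ : ℕ∞) + 1) f := by simpa using hfs
    exact (contDiff_succ_iff_deriv.1 this).2.2
  have hfi : Integrable f := hfs.continuous.integrable_of_hasCompactSupport hfc
  have hf'i : Integrable (deriv f) := hf's.continuous.integrable_of_hasCompactSupport hf'c
  have hder := Real.fourier_deriv hfi (hfs.differentiable (by simp)) hf'i
  let Φ : ℝ → ℝ := fun y => (𝓕 f y).re
  have hreal : ∀ y, 𝓕 f y = (Φ y : ℂ) := by
    intro y
    have : (starRingEnd ℂ) (𝓕 f y) = 𝓕 f y := by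
      rw [Real.fourier_real_eq_integral_exp_smul, ← integral_conj, ← integral_neg_eq_self]
      congr 1
      ext v
      simp only [smul_eq_mul, map_mul, f, φ.neg, conj_ofReal, ← exp_conj, conj_I]
      congr 2
      push_cast; ring
    exact (conj_eq_iff_re.1 this).symm
  have hI1 : Integrable (fun y => Φ y ^ 2) := by
    have := ((𝓕 (hfc.toSchwartzMap hfs)).memLp 2 volume).integrable_norm_pow (p := 2) (by norm_num)
    refine this.congr (ae_of_all _ fun y => ?_)
    have : (𝓕 (hfc.toSchwartzMap hfs)) y = (Φ y : ℂ) := hreal y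
    simp [this]
  have hI2 : Integrable (fun y => y ^ 2 * Φ y ^ 2) := by
    have := (((𝓕 (hf'c.toSchwartzMap hf's)).memLp 2 volume).integrable_norm_pow (p := 2)
      (by norm_num)).const_mul (1 / (4 * Real.pi ^ 2))
    refine this.congr (ae_of_all _ fun y => ?_)
    have : (𝓕 (hf'c.toSchwartzMap hf's)) y = (2 * Real.pi * I * y) • (Φ y : ℂ) := by
      rw [← hreal y]; exact congrFun hder y
    simp only [this]
    have hp := Real.pi_pos
    simp [mul_pow, abs_of_pos hp]
    field_simp
    ring
  have hcont : Continuous (fun y => Φ y ^ 2) := by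
    have : Continuous (𝓕 f) := (𝓕 (hfc.toSchwartzMap hfs)).continuous
    fun_prop
  have hpos : 0 < ∫ y, Φ y ^ 2 := by
    refine integral_pos_of_integrable_nonneg_nonzero (x := 0) hcont hI1 (fun y => by positivity) ?_
    have h0 : 𝓕 f 0 = ((∫ x, φ x : ℝ) : ℂ) := by
      rw [Real.fourier_real_eq_integral_exp_smul, ← integral_complex_ofReal]
      simp [f]
    have h1 : Φ 0 = ∫ x, φ x := by exact_mod_cast (hreal 0).symm.trans h0
    rw [h1]
    exact (pow_pos (φ.integral_pos (μ := volume)) 2).ne'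
  set P := ∫ y, Φ y ^ 2 with hP
  set Q := ∫ y, y ^ 2 * Φ y ^ 2 with hQ
  have hQ0 : 0 ≤ Q := integral_nonneg fun y => by positivity
  let B : ℝ := Q / P + 1
  have hB : 0 < B := by positivity
  let M := ContinuousLinearMap.mul ℂ ℂ
  let c1 := convolution f f M volume
  let c2 := convolution (deriv f) (deriv f) M volume
  have hc1c : Continuous c1 := hfc.continuous_convolution_right M hfi.locallyIntegrable hfs.continuous
  have hc2c : Continuous c2 := hf'c.continuous_convolution_right M hf'i.locallyIntegrable hf's.continuous
  have hc1s : HasCompactSupport c1 := hfc.convolution M hfc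
  have hc2s : HasCompactSupport c2 := hf'c.convolution M hf'c
  have hc1i := hc1c.integrable_of_hasCompactSupport (μ := volume) hc1s
  have hc2i := hc2c.integrable_of_hasCompactSupport (μ := volume) hc2s
  have hF1 : ∀ y, 𝓕 c1 y = (Φ y : ℂ) * Φ y := fun y => by
    rw [← hreal]; exact Real.fourier_mul_convolution_eq hfi hfi y
  have hF2 : ∀ y, 𝓕 c2 y = ((2 * Real.pi * I * y) * (Φ y : ℂ)) * ((2 * Real.pi * I * y) * Φ y) :=
    fun y => by
      rw [← hreal, ← smul_eq_mul (2 * Real.pi * I * y), ← congrFun hder y]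
      exact Real.fourier_mul_convolution_eq hf'i hf'i y
  refine ⟨√B, fun u => (B : ℂ) * c1 u + (1 / (4 * Real.pi ^ 2) : ℂ) * c2 u,
    fun y => B * Φ y ^ 2 - y ^ 2 * Φ y ^ 2, by positivity, by fun_prop, ?_, ?_, ?_, ?_, ?_⟩
  · exact HasCompactSupport.add hc1s.mul_left hc2s.mul_left
  · intro y
    have e : 𝓕 (fun u => (B : ℂ) * c1 u + (1 / (4 * Real.pi ^ 2) : ℂ) * c2 u) y
        = B * 𝓕 c1 y + (1 / (4 * Real.pi ^ 2) : ℂ) * 𝓕 c2 y := by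
      have i1 := (Real.fourierIntegral_convergent_iff y).2 hc1i
      have i2 := (Real.fourierIntegral_convergent_iff y).2 hc2i
      simp only [Real.fourier_eq]
      rw [← integral_const_mul, ← integral_const_mul, ← integral_add (i1.const_mul _) (i2.const_mul _)]
      congr 1
      ext v
      simp only [Circle.smul_def, smul_eq_mul]
      ring
    rw [e, hF1, hF2]
    have : (Real.pi : ℂ) ≠ 0 := by exact_mod_cast Real.pi_ne_zero
    push_cast
    field_simp
    ring_nf
    simp [I_sq]
    ring
  · exact (hI1.const_mul B).sub hI2
  · intro y hy
    have : B ≤ y ^ 2 := by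
      rw [← sq_abs, ← Real.sq_sqrt hB.le]
      gcongr
    nlinarith [sq_nonneg (Φ y)]
  · rw [integral_sub (hI1.const_mul B) hI2, integral_const_mul, ← hP, ← hQ]
    have : B * P = Q + P := by simp only [B]; field_simp
    linarith

theorem kernel (a : ℝ) (ha : 0 < a) : ∃ (h : ℝ → ℂ) (g : ℝ → ℝ), Continuous h ∧ HasCompactSupport h ∧
    (∀ y, (g y : ℂ) = ∫ u : ℝ, cexp (-(2 * Real.pi * u * y) * I) * h u) ∧
    Integrable g ∧ (∀ y, a ≤ |y| → g y ≤ 0) ∧ 0 < ∫ y, g y := by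
  obtain ⟨A, h, g, hA, hc, hs, hF, hi, hn, hp⟩ := kernel0
  have hl : 0 < A / a := by positivity
  set l := A / a with hldef
  refine ⟨fun u => (l : ℂ)⁻¹ * h (l⁻¹ * u), fun y => g (l * y), by fun_prop, ?_, ?_, ?_, ?_, ?_⟩
  · exact HasCompactSupport.mul_left (hs.comp_homeomorph (Homeomorph.mulLeft₀ l⁻¹ (by positivity)))
  · intro y
    rw [← hF, Real.fourier_real_eq_integral_exp_smul]
    have := Measure.integral_comp_mul_left
      (fun u : ℝ => cexp (-(2 * Real.pi * (l * u) * y) * I) * ((l : ℂ)⁻¹ * h u)) l⁻¹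
    rw [inv_inv, abs_of_pos hl] at this
    have hlc : (l : ℂ) ≠ 0 := by exact_mod_cast hl.ne'
    calc _ = l • ∫ u : ℝ, cexp (-(2 * Real.pi * (l * u) * y) * I) * ((l : ℂ)⁻¹ * h u) := by
          rw [← integral_smul]
          congr 1; ext u
          rw [smul_eq_mul, real_smul]
          push_cast
          field_simp
      _ = _ := by
          rw [← this]
          congr 1; ext u
          push_cast
          field_simp
  · exact hi.comp_mul_left' hl.ne'
  · intro y hy
    apply hn
    rw [abs_mul, abs_of_pos hl]
    calc A = l * a := by rw [hldef]; field_simp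
      _ ≤ _ := by gcongr
  · rw [Measure.integral_comp_mul_left]
    exact smul_pos (by positivity) hp

open ArithmeticFunction in
theorem exists_aux : ∃ G : ℂ → ℂ, ContinuousOn G {s | 1 ≤ s.re} ∧ ∀ s : ℂ, 1 < s.re →
    LSeries (fun n => (vonMangoldt n : ℂ)) s = G s + 1 / (s - 1) := by
  refine ⟨vonMangoldt.LFunctionResidueClassAux (1 : ZMod 1),
    vonMangoldt.continuousOn_LFunctionResidueClassAux _, fun s hs => ?_⟩
  have := vonMangoldt.eqOn_LFunctionResidueClassAux (q := 1) (a := 1) isUnit_one hs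
  rw [this]
  have e : vonMangoldt.residueClass (1 : ZMod 1) = fun n => vonMangoldt n := by
    ext n
    simp [vonMangoldt.residueClass, Subsingleton.elim ((n : ZMod 1)) 1]
  simp [e]

open ArithmeticFunction in
theorem nonprime_summable :
    Summable fun n : ℕ => (if n.Prime then 0 else vonMangoldt n) / (n : ℝ) := by
  have := vonMangoldt.summable_residueClass_non_primes_div (q := 1) 1
  have e : vonMangoldt.residueClass (1 : ZMod 1) = fun n => vonMangoldt n := by
    ext n
    simp [vonMangoldt.residueClass, Subsingleton.elim ((n : ZMod 1)) 1]
  simpa [e] using this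

open ArithmeticFunction in
theorem term_eq (δ u : ℝ) (n : ℕ) :
    LSeries.term (fun n => (vonMangoldt n : ℂ)) (1 + δ + 2 * Real.pi * u * I) n =
      ((vonMangoldt n / (n : ℝ) ^ (1 + δ) : ℝ) : ℂ) * cexp (-(2 * Real.pi * u * Real.log n) * I) := by
  rcases eq_or_ne n 0 with rfl | hn
  · simp
  have hn' : (n : ℂ) ≠ 0 := by exact_mod_cast hn
  rw [LSeries.term_of_ne_zero hn, cpow_add _ _ hn', div_mul_eq_div_div]
  push_cast
  rw [ofReal_cpow (by positivity)]
  push_cast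
  rw [div_eq_mul_inv (_ / _), cpow_def_of_ne_zero hn' (2 * Real.pi * u * I), ← exp_neg,
    ← natCast_log]
  congr 2
  push_cast
  ring

open ArithmeticFunction in
theorem hasSum_side {h : ℝ → ℂ} {g : ℝ → ℝ} (hc : Continuous h) (hs : HasCompactSupport h)
    (hF : ∀ y, (g y : ℂ) = ∫ u : ℝ, cexp (-(2 * Real.pi * u * y) * I) * h u)
    (δ L : ℝ) (hδ : 0 < δ) :
    HasSum (fun n : ℕ => ((vonMangoldt n / (n : ℝ) ^ (1 + δ) * g (Real.log n - L) : ℝ) : ℂ))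
      (∫ u : ℝ, cexp ((2 * Real.pi * u * L) * I) * h u *
        LSeries (fun n => (vonMangoldt n : ℂ)) (1 + δ + 2 * Real.pi * u * I)) := by
  have hi : Integrable h := hc.integrable_of_hasCompactSupport hs
  let w : ℕ → ℝ := fun n => vonMangoldt n / (n : ℝ) ^ (1 + δ)
  have hw0 : ∀ n, 0 ≤ w n := fun n => by
    have : 0 ≤ vonMangoldt n := vonMangoldt_nonneg
    positivity
  have hw : Summable w := by
    have : LSeriesSummable (fun n => (vonMangoldt n : ℂ)) (1 + δ + 2 * Real.pi * (0 : ℝ) * I) :=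
      LSeriesSummable_vonMangoldt (by simpa using hδ)
    have h2 := this.norm
    refine h2.congr fun n => ?_
    rw [term_eq]
    simp only [ofReal_zero, mul_zero, zero_mul, neg_zero, exp_zero, mul_one, norm_real]
    exact Real.norm_of_nonneg (hw0 n)
  let F : ℕ → ℝ → ℂ := fun n u => (w n : ℂ) * (cexp (-(2 * Real.pi * u * (Real.log n - L : ℝ)) * I) * h u)
  have hnorm : ∀ (n : ℕ) u, ‖F n u‖ = w n * ‖h u‖ := by
    intro n u
    have : (-(2 * Real.pi * u * (Real.log n - L : ℝ)) * I : ℂ)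
      = ((-(2 * Real.pi * u * (Real.log n - L)) : ℝ) : ℂ) * I := by push_cast; ring
    simp only [F, this, norm_mul, norm_exp_ofReal_mul_I, norm_real, Real.norm_of_nonneg (hw0 _), one_mul]
  have hint : ∀ n, Integrable (F n) := fun n => by
    refine (hi.norm.const_mul (w n)).mono' ?_ (ae_of_all _ fun u => (hnorm n u).le)
    exact Continuous.aestronglyMeasurable (by fun_prop)
  have hsum := hasSum_integral_of_summable_integral_norm hint (by
    simp only [hnorm, integral_const_mul]
    exact hw.mul_right _)
  have e1 : (fun n : ℕ => ((vonMangoldt n / (n : ℝ) ^ (1 + δ) * g (Real.log n - L) : ℝ) : ℂ))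
      = fun n => ∫ u, F n u := by
    ext n
    simp only [F, integral_const_mul]
    rw [← hF]
    simp only [w]
    push_cast
    rfl
  rw [e1]
  suffices e2 : (∫ u : ℝ, cexp ((2 * Real.pi * u * L) * I) * h u *
      LSeries (fun n => (vonMangoldt n : ℂ)) (1 + δ + 2 * Real.pi * u * I)) = ∫ u, ∑' n, F n u by
    rw [e2]; exact hsum
  · congr 1
    ext u
    rw [LSeries, ← tsum_mul_left]
    congr 1
    ext n
    rw [term_eq]
    have : cexp (-(2 * Real.pi * u * (Real.log n - L : ℝ)) * I)
      = cexp (2 * Real.pi * u * L * I) * cexp (-(2 * Real.pi * u * Real.log n) * I) := by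
      rw [← exp_add]; congr 1; push_cast; ring
    simp only [F, this, w]
    ring

theorem integral_side {h : ℝ → ℂ} {g : ℝ → ℝ} (hc : Continuous h) (hs : HasCompactSupport h)
    (hF : ∀ y, (g y : ℂ) = ∫ u : ℝ, cexp (-(2 * Real.pi * u * y) * I) * h u)
    (δ L : ℝ) (hδ : 0 < δ) :
    ((∫ v in Set.Ioi (0 : ℝ), Real.exp (-δ * v) * g (v - L) : ℝ) : ℂ) =
      ∫ u : ℝ, cexp ((2 * Real.pi * u * L) * I) * h u * (1 / (δ + 2 * Real.pi * u * I)) := by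
  have hi : Integrable h := hc.integrable_of_hasCompactSupport hs
  let f : ℝ → ℝ → ℂ := fun v u => (Real.exp (-δ * v) : ℂ) *
    (cexp (-(2 * Real.pi * u * (v - L : ℝ)) * I) * h u)
  have hnorm : ∀ v u, ‖f v u‖ = ‖Real.exp (-δ * v) * ‖h u‖‖ := by
    intro v u
    have : (-(2 * Real.pi * u * (v - L : ℝ)) * I : ℂ)
      = ((-(2 * Real.pi * u * (v - L)) : ℝ) : ℂ) * I := by push_cast; ring
    simp only [f, this, norm_mul, norm_exp_ofReal_mul_I, norm_real, one_mul, norm_norm]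
  have hfi : Integrable (Function.uncurry f) ((volume.restrict (Set.Ioi 0)).prod volume) := by
    have h1 : IntegrableOn (fun v : ℝ => Real.exp (-δ * v)) (Set.Ioi 0) :=
      exp_neg_integrableOn_Ioi 0 hδ
    refine (Integrable.mul_prod h1 hi.norm).mono ?_ (ae_of_all _ fun p => (hnorm p.1 p.2).le)
    refine Continuous.aestronglyMeasurable ?_
    simp only [f, Function.uncurry_def]
    fun_prop
  have hswap := integral_integral_swap hfi
  rw [← integral_complex_ofReal]
  calc _ = ∫ v in Set.Ioi (0 : ℝ), ∫ u, f v u := by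
        congr 1; ext v
        simp only [f, integral_const_mul]
        rw [← hF]; push_cast; rfl
    _ = _ := by
        rw [hswap]
        congr 1; ext u
        have hre : (-(δ + 2 * Real.pi * u * I) : ℂ).re < 0 := by simpa using hδ
        have := integral_exp_mul_complex_Ioi hre 0
        calc _ = ∫ v in Set.Ioi (0 : ℝ), cexp ((2 * Real.pi * u * L) * I) * h u *
              cexp (-(δ + 2 * Real.pi * u * I) * v) := by
              congr 1; ext v
              simp only [f]
              rw [mul_right_comm (cexp _) (h u), ← mul_assoc, ofReal_exp, ← exp_add, ← exp_add]
              congr 2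
              push_cast; ring
          _ = _ := by
              rw [integral_const_mul, this]
              rw [neg_div_neg_eq]
              simp

open ArithmeticFunction in
theorem window_ineq {h : ℝ → ℂ} {g : ℝ → ℝ} (hc : Continuous h) (hs : HasCompactSupport h)
    (hF : ∀ y, (g y : ℂ) = ∫ u : ℝ, cexp (-(2 * Real.pi * u * y) * I) * h u)
    {a : ℝ} (hn : ∀ y, a ≤ |y| → g y ≤ 0)
    {G : ℂ → ℂ} (hG : ContinuousOn G {s | 1 ≤ s.re}) (hGe : ∀ s : ℂ, 1 < s.re →
      LSeries (fun n => (vonMangoldt n : ℂ)) s = G s + 1 / (s - 1))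
    (δ L : ℝ) (hδ : 0 < δ) (S : Finset ℕ) (hS : ∀ n ∉ S, n ≠ 0 → a ≤ |Real.log n - L|) :
    (∫ v in Set.Ioi (0 : ℝ), Real.exp (-δ * v) * g (v - L)) +
      (∫ u : ℝ, cexp ((2 * Real.pi * u * L) * I) * h u * G (1 + δ + 2 * Real.pi * u * I)).re ≤
    ∑ n ∈ S, vonMangoldt n / (n : ℝ) ^ (1 + δ) * g (Real.log n - L) := by
  have h1 := hasSum_side hc hs hF δ L hδ
  have hGc : Continuous fun u : ℝ => G (1 + δ + 2 * Real.pi * u * I) := by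
    refine hG.comp_continuous (by fun_prop) fun u => ?_
    simp [hδ.le]
  have hne : ∀ u : ℝ, (δ + 2 * Real.pi * u * I : ℂ) ≠ 0 := fun u hu => by
    have := congrArg re hu
    simp at this
    exact hδ.ne' this
  have hEc : Continuous fun u : ℝ => cexp ((2 * Real.pi * u * L) * I) := by fun_prop
  have i1 : Integrable fun u : ℝ => cexp ((2 * Real.pi * u * L) * I) * h u * G (1 + δ + 2 * Real.pi * u * I) :=
    Continuous.integrable_of_hasCompactSupport ((hEc.mul hc).mul hGc) (hs.mul_left.mul_right)
  have i2 : Integrable fun u : ℝ => cexp ((2 * Real.pi * u * L) * I) * h u * (1 / (δ + 2 * Real.pi * u * I)) :=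
    Continuous.integrable_of_hasCompactSupport ((hEc.mul hc).mul
      (continuous_const.div (by fun_prop) hne)) (hs.mul_left.mul_right)
  have e : (∫ u : ℝ, cexp ((2 * Real.pi * u * L) * I) * h u *
        LSeries (fun n => (vonMangoldt n : ℂ)) (1 + δ + 2 * Real.pi * u * I)) =
      (∫ u : ℝ, cexp ((2 * Real.pi * u * L) * I) * h u * G (1 + δ + 2 * Real.pi * u * I)) +
      ((∫ v in Set.Ioi (0 : ℝ), Real.exp (-δ * v) * g (v - L) : ℝ) : ℂ) := by
    rw [integral_side hc hs hF δ L hδ, ← integral_add i1 i2]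
    congr 1; ext u
    rw [hGe _ (by simpa using hδ)]
    ring
  rw [e] at h1
  have h2 := Complex.hasSum_re h1
  simp only [ofReal_re, add_re] at h2
  rw [add_comm]
  have h3 := sum_le_hasSum S (f := fun n : ℕ => -(vonMangoldt n / (n : ℝ) ^ (1 + δ) * g (Real.log n - L)))
    (fun n hnS => ?_) h2.neg
  · rw [Finset.sum_neg_distrib] at h3
    linarith
  · rcases eq_or_ne n 0 with rfl | h0
    · simp
    have := hn _ (hS n hnS h0)
    have h5 : 0 ≤ vonMangoldt n := vonMangoldt_nonneg
    have h6 : 0 ≤ vonMangoldt n / (n : ℝ) ^ (1 + δ) := by positivity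
    nlinarith

open ArithmeticFunction in
theorem window_limit {h : ℝ → ℂ} {g : ℝ → ℝ} (hc : Continuous h) (hs : HasCompactSupport h)
    (hF : ∀ y, (g y : ℂ) = ∫ u : ℝ, cexp (-(2 * Real.pi * u * y) * I) * h u)
    (hgi : Integrable g)
    {a : ℝ} (hn : ∀ y, a ≤ |y| → g y ≤ 0)
    {G : ℂ → ℂ} (hG : ContinuousOn G {s | 1 ≤ s.re}) (hGe : ∀ s : ℂ, 1 < s.re →
      LSeries (fun n => (vonMangoldt n : ℂ)) s = G s + 1 / (s - 1))
    (L : ℝ) (S : Finset ℕ) (hS : ∀ n ∉ S, n ≠ 0 → a ≤ |Real.log n - L|) :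
    (∫ v in Set.Ioi (-L), g v) +
      (𝓕 (fun u : ℝ => h u * G (1 + 2 * Real.pi * u * I)) (-L)).re ≤
    ∑ n ∈ S, vonMangoldt n / (n : ℝ) * g (Real.log n - L) := by
  have hgL : Integrable fun v => g (v - L) := hgi.comp_sub_right L
  have t1 : Tendsto (fun δ : ℝ => ∫ v in Set.Ioi (0 : ℝ), Real.exp (-δ * v) * g (v - L)) (𝓝[>] 0)
      (𝓝 (∫ v in Set.Ioi (0 : ℝ), g (v - L))) := by
    refine tendsto_integral_filter_of_dominated_convergence (fun v => ‖g (v - L)‖) ?_ ?_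
      hgL.norm.integrableOn ?_
    · refine Eventually.of_forall fun δ => ?_
      refine AEStronglyMeasurable.mul (Continuous.aestronglyMeasurable (by fun_prop)) ?_
      exact hgL.aestronglyMeasurable.restrict
    · filter_upwards [self_mem_nhdsWithin] with δ hδ
      filter_upwards [ae_restrict_mem measurableSet_Ioi] with v hv
      rw [norm_mul, Real.norm_of_nonneg (Real.exp_pos _).le]
      refine mul_le_of_le_one_left (norm_nonneg _) (Real.exp_le_one_iff.2 ?_)
      have := mul_pos (Set.mem_Ioi.1 hδ) (Set.mem_Ioi.1 hv)
      linarith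
    · refine ae_of_all _ fun v => ?_
      have : Continuous fun δ : ℝ => Real.exp (-δ * v) * g (v - L) := by fun_prop
      have := this.tendsto 0
      simp only [neg_zero, zero_mul, Real.exp_zero, one_mul] at this
      exact this.mono_left nhdsWithin_le_nhds
  have e1 : ∫ v in Set.Ioi (0 : ℝ), g (v - L) = ∫ v in Set.Ioi (-L), g v := by
    rw [← integral_indicator measurableSet_Ioi, ← integral_indicator measurableSet_Ioi,
      ← integral_sub_right_eq_self (Set.indicator (Set.Ioi (-L)) g) L]
    congr 1; ext v
    simp [Set.indicator]
  obtain ⟨C, hC⟩ : ∃ C, ∀ p ∈ (Set.Icc (0 : ℝ) 1) ×ˢ tsupport h,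
      ‖G (1 + (p.1 : ℝ) + 2 * Real.pi * (p.2 : ℝ) * I)‖ ≤ C := by
    refine IsCompact.exists_bound_of_continuousOn (isCompact_Icc.prod hs) ?_
    refine hG.comp (Continuous.continuousOn (by fun_prop)) ?_
    rintro ⟨δ, u⟩ hp
    have := hp.1.1
    simpa using this
  have hEc : Continuous fun u : ℝ => cexp ((2 * Real.pi * u * L) * I) := by fun_prop
  have hEn : ∀ u : ℝ, ‖cexp ((2 * Real.pi * u * L) * I)‖ = 1 := fun u => by
    rw [← norm_exp_ofReal_mul_I (2 * Real.pi * u * L)]; push_cast; rfl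
  have hGc : ∀ δ : ℝ, 0 ≤ δ → Continuous fun u : ℝ => G (1 + δ + 2 * Real.pi * u * I) := by
    intro δ hδ
    refine hG.comp_continuous (by fun_prop) fun u => ?_
    simp [hδ]
  have t2 : Tendsto (fun δ : ℝ => ∫ u : ℝ, cexp ((2 * Real.pi * u * L) * I) * h u *
      G (1 + δ + 2 * Real.pi * u * I)) (𝓝[>] 0)
      (𝓝 (∫ u : ℝ, cexp ((2 * Real.pi * u * L) * I) * h u * G (1 + 2 * Real.pi * u * I))) := by
    refine tendsto_integral_filter_of_dominated_convergence (fun u => ‖h u‖ * C) ?_ ?_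
      ((hc.integrable_of_hasCompactSupport hs).norm.mul_const C) ?_
    · filter_upwards [self_mem_nhdsWithin] with δ hδ
      exact ((hEc.mul hc).mul (hGc δ (le_of_lt hδ))).aestronglyMeasurable
    · filter_upwards [Ioo_mem_nhdsGT (zero_lt_one (α := ℝ))] with δ hδ
      refine ae_of_all _ fun u => ?_
      rw [norm_mul, norm_mul, hEn, one_mul]
      by_cases hu : u ∈ tsupport h
      · gcongr
        exact hC (δ, u) ⟨⟨hδ.1.le, hδ.2.le⟩, hu⟩
      · simp [image_eq_zero_of_notMem_tsupport hu]
    · refine ae_of_all _ fun u => ?_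
      refine Tendsto.const_mul _ ?_
      have h0 : ContinuousWithinAt G {s | 1 ≤ s.re} (1 + 2 * Real.pi * u * I) := hG _ (by simp)
      refine h0.tendsto.comp (tendsto_nhdsWithin_iff.2 ⟨?_, ?_⟩)
      · have : Continuous fun δ : ℝ => (1 + δ + 2 * Real.pi * u * I : ℂ) := by fun_prop
        have := this.tendsto 0
        simp only [ofReal_zero, add_zero] at this
        exact this.mono_left nhdsWithin_le_nhds
      · filter_upwards [self_mem_nhdsWithin] with δ hδ
        have : 0 < δ := hδ
        simp [this.le]
  have e2 : ∫ u : ℝ, cexp ((2 * Real.pi * u * L) * I) * h u * G (1 + 2 * Real.pi * u * I) =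
      𝓕 (fun u : ℝ => h u * G (1 + 2 * Real.pi * u * I)) (-L) := by
    rw [Real.fourier_real_eq_integral_exp_smul]
    congr 1; ext u
    rw [smul_eq_mul, mul_assoc]
    congr 3
    push_cast; ring
  have t3 : Tendsto (fun δ : ℝ => ∑ n ∈ S, vonMangoldt n / (n : ℝ) ^ (1 + δ) * g (Real.log n - L))
      (𝓝[>] 0) (𝓝 (∑ n ∈ S, vonMangoldt n / (n : ℝ) * g (Real.log n - L))) := by
    refine tendsto_finsetSum _ fun n _ => ?_
    rcases eq_or_ne n 0 with rfl | h0
    · simp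
    have hn0 : (0 : ℝ) < n := by positivity
    have : Continuous fun δ : ℝ => vonMangoldt n / (n : ℝ) ^ (1 + δ) * g (Real.log n - L) := by
      refine Continuous.mul (continuous_const.div ?_ fun δ => (Real.rpow_pos_of_pos hn0 _).ne')
        continuous_const
      exact (Real.continuous_const_rpow hn0.ne').comp (by fun_prop)
    have := this.tendsto 0
    simp only [add_zero, Real.rpow_one] at this
    exact this.mono_left nhdsWithin_le_nhds
  rw [← e1, ← e2]
  refine le_of_tendsto_of_tendsto (t1.add ((continuous_re.tendsto _).comp t2)) t3 ?_
  filter_upwards [self_mem_nhdsWithin] with δ hδ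
  exact window_ineq hc hs hF hn hG hGe δ L hδ S hS

open ArithmeticFunction in
theorem exists_prime_window (a : ℝ) (ha : 0 < a) :
    ∀ᶠ L : ℝ in atTop, ∃ r : ℕ, r.Prime ∧ |Real.log r - L| < a := by
  obtain ⟨h, g, hc, hs, hF, hgi, hn, hpos⟩ := kernel a ha
  obtain ⟨G, hG, hGe⟩ := exists_aux
  have t1 : Tendsto (fun L : ℝ => ∫ v in Set.Ioi (-L), g v) atTop (𝓝 (∫ v, g v)) :=
    (aecover_Ioi tendsto_neg_atTop_atBot).integral_tendsto_of_countably_generated hgi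
  have t2 : Tendsto (fun L : ℝ => (𝓕 (fun u : ℝ => h u * G (1 + 2 * Real.pi * u * I)) (-L)).re)
      atTop (𝓝 0) := by
    have := (Real.zero_at_infty_fourier (fun u : ℝ => h u * G (1 + 2 * Real.pi * u * I))).comp
      ((tendsto_neg_atTop_atBot (G := ℝ)).mono_right atBot_le_cocompact)
    exact (continuous_re.tendsto 0).comp this
  have t3 := t1.add t2
  rw [add_zero] at t3
  set c := (∫ v, g v) / 2 with hcdef
  have hc0 : 0 < c := by positivity
  set M := ∫ u, ‖h u‖ with hM
  have hM0 : 0 ≤ M := integral_nonneg fun _ => norm_nonneg _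
  have hgM : ∀ y, g y ≤ M := by
    intro y
    refine (le_abs_self _).trans ?_
    rw [← Real.norm_eq_abs, ← norm_real, hF]
    refine (norm_integral_le_integral_norm _).trans (le_of_eq ?_)
    congr 1; ext u
    have : (-(2 * Real.pi * u * y) * I : ℂ) = ((-(2 * Real.pi * u * y) : ℝ) : ℂ) * I := by
      push_cast; ring
    rw [norm_mul, this, norm_exp_ofReal_mul_I, one_mul]
  obtain ⟨s, hsv⟩ := summable_iff_vanishing_norm.1 nonprime_summable (c / (M + 1)) (by positivity)
  filter_upwards [t3.eventually (lt_mem_nhds (show c < ∫ v, g v by rw [hcdef]; linarith)),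
    eventually_ge_atTop (Real.log (s.sup id + 1) + a)] with L h1 h2
  by_contra! hcon
  let S := (Finset.range (⌈Real.exp (L + a)⌉₊ + 1)).filter fun n : ℕ => n ≠ 0 ∧ |Real.log n - L| < a
  have hS : ∀ n ∉ S, n ≠ 0 → a ≤ |Real.log n - L| := by
    intro n hnS h0
    by_contra! hlt
    apply hnS
    simp only [S, Finset.mem_filter, Finset.mem_range]
    refine ⟨?_, h0, hlt⟩
    have : Real.log n < L + a := by linarith [(abs_lt.1 hlt).2]
    rw [Real.log_lt_iff_lt_exp (by positivity)] at this
    have := this.le.trans (Nat.le_ceil _)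
    have : n ≤ ⌈Real.exp (L + a)⌉₊ := by exact_mod_cast this
    omega
  have h3 := window_limit hc hs hF hgi hn hG hGe L S hS
  have hdis : Disjoint S s := by
    rw [Finset.disjoint_left]
    intro n hnS hns
    simp only [S, Finset.mem_filter] at hnS
    have h4 : n ≤ s.sup id := Finset.le_sup (f := id) hns
    have h5 := (abs_lt.1 hnS.2.2).1
    have h6 : Real.log n ≤ Real.log (s.sup id + 1) := by
      have : 0 < n := Nat.pos_of_ne_zero hnS.2.1
      have h7 : (n : ℝ) ≤ (s.sup id : ℕ) := by exact_mod_cast h4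
      exact Real.log_le_log (by positivity) (by linarith)
    linarith
  have h4 := hsv S hdis
  have h5 : ∑ n ∈ S, vonMangoldt n / (n : ℝ) * g (Real.log n - L) ≤
      M * ∑ n ∈ S, (if n.Prime then 0 else vonMangoldt n) / (n : ℝ) := by
    rw [Finset.mul_sum]
    refine Finset.sum_le_sum fun n hnS => ?_
    simp only [S, Finset.mem_filter] at hnS
    have hnp : ¬ n.Prime := fun hp => absurd hnS.2.2 (not_lt.2 (hcon n hp))
    rw [if_neg hnp, mul_comm]
    have : 0 ≤ vonMangoldt n := vonMangoldt_nonneg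
    exact mul_le_mul_of_nonneg_right (hgM _) (by positivity)
  have h6 := (le_abs_self _).trans_lt h4
  have h7 : M * (c / (M + 1)) ≤ c := by
    rw [mul_div_assoc', div_le_iff₀ (by positivity)]
    nlinarith
  have h8 := mul_le_mul_of_nonneg_left h6.le hM0
  linarith

/-- For every real `k ≥ 2` there is a constant `N` such that for all
consecutive primes `p' < p` with `p' > N`, the gap satisfies
`p - p' < min (p'/(k-1)) (p/k)`. -/
theorem gap_bound_fractional :
    ∀ k : ℝ, 2 ≤ k → ∃ N : ℕ, ∀ p' p : ℕ, p'.Prime → p.Prime → p' < p →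
      (∀ r : ℕ, r.Prime → ¬(p' < r ∧ r < p)) → N < p' →
      (p : ℝ) - (p' : ℝ) < min ((p' : ℝ) / (k - 1)) ((p : ℝ) / k) := by
  intro k hk
  have hk1 : 0 < k - 1 := by linarith
  have hq : 1 < k / (k - 1) := by rw [lt_div_iff₀ hk1]; linarith
  set a := Real.log (k / (k - 1)) / 2 with ha_def
  have ha : 0 < a := by have := Real.log_pos hq; positivity
  obtain ⟨L0, hL0⟩ := eventually_atTop.1 (exists_prime_window a ha)
  refine ⟨⌈Real.exp L0⌉₊, fun p' p hp' hp hlt hcons hN => ?_⟩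
  have hp'0 : (0 : ℝ) < p' := by exact_mod_cast hp'.pos
  have h1 : Real.exp L0 < p' := (Nat.le_ceil _).trans_lt (by exact_mod_cast hN)
  have h2 : L0 < Real.log p' := (Real.lt_log_iff_exp_lt hp'0).2 h1
  obtain ⟨r, hr, hra⟩ := hL0 (Real.log p' + a) (by linarith)
  have hr0 : (0 : ℝ) < r := by exact_mod_cast hr.pos
  obtain ⟨h3, h4⟩ := abs_lt.1 hra
  have h5 : p' < r := by
    have : (p' : ℝ) < r := (Real.log_lt_log_iff hp'0 hr0).1 (by linarith)
    exact_mod_cast this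
  have h6 : (r : ℝ) < p' * (k / (k - 1)) := by
    rw [← Real.log_lt_log_iff hr0 (by positivity), Real.log_mul hp'0.ne' (by positivity)]
    linarith
  have h7 : p ≤ r := by
    by_contra! hh
    exact hcons r hr ⟨h5, hh⟩
  have h8 : (p : ℝ) ≤ r := by exact_mod_cast h7
  have h9 : (p : ℝ) * (k - 1) < p' * k := by
    have := h8.trans_lt h6
    rwa [mul_div_assoc', lt_div_iff₀ hk1] at this
  rw [lt_min_iff, lt_div_iff₀ hk1, lt_div_iff₀ (by linarith)]
  constructor <;> linarith
end
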